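/- Let κ be an infinite cardinal with κ^ω = κ, let p be a selective ultrafilter on ω, and let ℱ be a finite subset of (ℤ^(κ))^ω such that {[f]_p : f ∈ ℱ} ∪ {[χ⃗_α]_p : α < κ} is a ℚ-linearly independent subset of Ult(ℚ,p). Then for every ε > 0 and every finite subset E of κ there exist A ∈ p and a family (δ_n : n ∈ A) of positive real numbers such that: whenever (U_f : f ∈ ℱ) is a family of arcs of 𝕋 of length ε and ϱ is an arc function of length at least ε with supp ϱ ⊆ E, then for each n ∈ A there exists a δ_n-arc function ψ_n ≤ ϱ such that supp ψ_n = ⋃_{f ∈ ℱ} supp f(n) ∪ E and Σ_{μ ∈ supp f(n)} f(n)(μ)·ψ_n(μ) ⊆ U_f for each f ∈ ℱ. -/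

import Mathlib

open Cardinal Filter Set Pointwise

noncomputable section

/-- A free (nonprincipal) ultrafilter on ω. -/
def IsFreeUltrafilter (p : Ultrafilter ℕ) : Prop := ∀ n : ℕ, p ≠ pure n

/-- A selective ultrafilter on ω. -/
def IsSelective (p : Ultrafilter ℕ) : Prop :=
  IsFreeUltrafilter p ∧
  ∀ A : ℕ → Set ℕ,
    (∀ k, (A k).Nonempty) → (Pairwise fun k l => Disjoint (A k) (A l)) →
    (⋃ k, A k) = Set.univ →
    (∃ k, A k ∈ p) ∨ ∃ B ∈ p, ∀ k, ∃! n, n ∈ B ∩ A k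

/-- Rudin–Keisler order: `U ≤ V` iff `V = f_*(U)` for some `f`. -/
def RKle (U V : Ultrafilter ℕ) : Prop := ∃ f : ℕ → ℕ, Ultrafilter.map f U = V

/-- Rudin–Keisler incomparability. -/
def RKIncomp (U V : Ultrafilter ℕ) : Prop := ¬ RKle U V ∧ ¬ RKle V U

/-- The index set of order type (the initial ordinal of) `κ`. -/
abbrev Idx (κ : Cardinal) : Type _ := ↥(Set.Iio κ.ord)

/-- The free abelian group `ℤ^(κ)` of finitely supported integer functions on `κ`. -/
abbrev GZ (κ : Cardinal) := Idx κ →₀ ℤ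

/-- The ℚ-vector space `ℚ^(κ)` of finitely supported rational functions on `κ`. -/
abbrev GQ (κ : Cardinal) := Idx κ →₀ ℚ

/-- The canonical embedding `ℤ^(κ) → ℚ^(κ)`. -/
def toQ (κ : Cardinal) (f : GZ κ) : GQ κ :=
  Finsupp.mapRange (Int.cast : ℤ → ℚ) Int.cast_zero f

/-- The characteristic function `χ_ξ`. -/
def chi (κ : Cardinal) (ξ : Idx κ) : GZ κ := Finsupp.single ξ 1

/-- The class `[f]_p` of a sequence `f : ω → ℤ^(κ)` in the ultrapower
`Ult(ℚ, p) = (ℚ^(κ))^ω / p`, realized as a germ. -/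
def cls (κ : Cardinal) (p : Ultrafilter ℕ) (f : ℕ → GZ κ) :
    Filter.Germ (↑p : Filter ℕ) (GQ κ) :=
  (↑(fun n => toQ κ (f n)) : Filter.Germ (↑p : Filter ℕ) (GQ κ))

/-- The class `[χ⃗_ξ]_p` of the constant sequence with value `χ_ξ`. -/
def clsChi (κ : Cardinal) (p : Ultrafilter ℕ) (ξ : Idx κ) :
    Filter.Germ (↑p : Filter ℕ) (GQ κ) :=
  cls κ p (fun _ => chi κ ξ)

/-- `cls` as an additive homomorphism. -/
def clsHom (κ : Cardinal) (p : Ultrafilter ℕ) :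
    (ℕ → GZ κ) →+ Filter.Germ (↑p : Filter ℕ) (GQ κ) :=
  AddMonoidHom.mk' (cls κ p) (by
    intro a b
    unfold cls
    have h : (fun n => toQ κ ((a + b) n)) =
        (fun n => toQ κ (a n)) + (fun n => toQ κ (b n)) := by
      funext n
      simp only [Pi.add_apply, toQ]
      exact Finsupp.mapRange_add (fun x y => by push_cast; ring) _ _
    rw [h, ← Filter.Germ.coe_add])

/-- `Ult(ℤ, p)`: the subgroup of `Ult(ℚ, p)` consisting of classes of
integer-valued sequences. -/
def UltZ (κ : Cardinal) (p : Ultrafilter ℕ) :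
    AddSubgroup (Filter.Germ (↑p : Filter ℕ) (GQ κ)) :=
  (clsHom κ p).range

/-- `ℱ` is linearly independent mod `A*`. -/
def LinIndepMod (κ : Cardinal) (A : Set ℕ) (F : Set (ℕ → GZ κ)) : Prop :=
  ∀ p : Ultrafilter ℕ, IsFreeUltrafilter p → A ∈ p →
    (∀ f ∈ F, ∀ g ∈ F, f ≠ g → cls κ p f ≠ cls κ p g) ∧
    LinearIndependent ℚ
      (Sum.elim (fun f : F => cls κ p ↑f) (fun ξ : Idx κ => clsChi κ p ξ))

/-- `ℰ` is maximal (w.r.t. inclusion) among subsets linearly independent mod `A*`. -/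
def MaximalLinIndepMod (κ : Cardinal) (A : Set ℕ) (E : Set (ℕ → GZ κ)) : Prop :=
  LinIndepMod κ A E ∧ ∀ E' : Set (ℕ → GZ κ), LinIndepMod κ A E' → E ⊆ E' → E' = E

/-- A finite tower in ω: a finite decreasing sequence of infinite subsets of ω. -/
def IsTower (T : List (Set ℕ)) : Prop :=
  (∀ A ∈ T, A.Infinite) ∧
  ∀ i : ℕ, ∀ h : i + 1 < T.length, T.get ⟨i + 1, h⟩ ⊆ T.get ⟨i, Nat.lt_of_succ_lt h⟩

/-- `l(T)`: the last term of a finite tower, with `l(∅) = ω`. -/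
def lastOf (T : List (Set ℕ)) : Set ℕ := T.getLastD Set.univ

/-- `x` is a `p`-limit of the sequence `s`. -/
def IsPLim {X : Type*} [TopologicalSpace X] (p : Ultrafilter ℕ) (s : ℕ → X) (x : X) : Prop :=
  ∀ U ∈ nhds x, {n | s n ∈ U} ∈ p

/-- Countable compactness: every countable open cover has a finite subcover. -/
def CountablyCompactSp (X : Type*) [TopologicalSpace X] : Prop :=
  ∀ 𝒰 : Set (Set X), 𝒰.Countable → (∀ u ∈ 𝒰, IsOpen u) → ⋃₀ 𝒰 = Set.univ →
    ∃ ℱ ⊆ 𝒰, ℱ.Finite ∧ ⋃₀ ℱ = Set.univ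


/-- The circle group 𝕋 = ℝ/ℤ. -/
abbrev Circle1 := AddCircle (1 : ℝ)

/-- The arc of 𝕋 determined by the interval `(a, a + l)`. -/
def arcOf (a l : ℝ) : Set Circle1 := (fun x : ℝ => (x : Circle1)) '' Set.Ioo a (a + l)

/-- The support of an arc function: coordinates where it is not all of 𝕋. -/
def arcSupp (κ : Cardinal) (ψ : Idx κ → Set Circle1) : Set (Idx κ) :=
  {α | ψ α ≠ Set.univ}

/-- An `ε`-arc function: finitely supported, and on its support each value is an
arc of length exactly `ε`. -/
def IsEpsArcFn (κ : Cardinal) (ε : ℝ) (ψ : Idx κ → Set Circle1) : Prop :=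
  (arcSupp κ ψ).Finite ∧ ∀ α, ψ α = Set.univ ∨ ∃ a : ℝ, ψ α = arcOf a ε

/-- An arc function of length at least `ε`. -/
def IsArcFnGe (κ : Cardinal) (ε : ℝ) (ψ : Idx κ → Set Circle1) : Prop :=
  (arcSupp κ ψ).Finite ∧ ∀ α, ψ α = Set.univ ∨ ∃ a l : ℝ, ε ≤ l ∧ ψ α = arcOf a l

/-- `ψ ≤ ϱ` for arc functions: coordinatewise, either the closure of `ψ α` is
contained in `ϱ α`, or `ψ α = ϱ α`. -/
def ArcFnLE (κ : Cardinal) (ψ ϱ : Idx κ → Set Circle1) : Prop :=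
  ∀ α, closure (ψ α) ⊆ ϱ α ∨ ψ α = ϱ α


/-! ### Helper lemmas -/

/-- Geometric sums are bounded away from the identity of the circle. -/
theorem exists_geom_bound (η : ℝ) (hη : 0 < η) :
    ∃ C : ℝ, ∀ x : Circle1, η ≤ ‖x‖ → ∀ m : ℕ,
      ‖∑ a ∈ Finset.range m, ((AddCircle.toCircle x : Circle) : ℂ) ^ a‖ ≤ C := by
  have hK : IsCompact {x : Circle1 | η ≤ ‖x‖} :=
    (isClosed_le continuous_const continuous_norm).isCompact
  have hcont : ContinuousOn
      (fun x : Circle1 => ‖((AddCircle.toCircle x : Circle) : ℂ) - 1‖⁻¹) {x : Circle1 | η ≤ ‖x‖} := by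
    apply ContinuousOn.inv₀
    · apply Continuous.continuousOn
      have := AddCircle.continuous_toCircle (T := (1:ℝ))
      fun_prop
    · intro x hx h0
      rw [norm_eq_zero, sub_eq_zero] at h0
      have h1 : AddCircle.toCircle x = AddCircle.toCircle (0 : Circle1) := by
        rw [AddCircle.toCircle_zero]
        exact Circle.ext h0
      have h2 := AddCircle.injective_toCircle (one_ne_zero) h1
      rw [h2] at hx
      simp only [Set.mem_ofPred_eq, norm_zero] at hx
      linarith
  obtain ⟨C, hC⟩ := hK.exists_bound_of_continuousOn hcont
  refine ⟨2 * C, fun x hx m => ?_⟩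
  have h3 := hC x hx
  by_cases hz : ((AddCircle.toCircle x : Circle) : ℂ) = 1
  · exfalso
    have h1 : AddCircle.toCircle x = AddCircle.toCircle (0 : Circle1) := by
      rw [AddCircle.toCircle_zero]
      exact Circle.ext hz
    have h2 := AddCircle.injective_toCircle (one_ne_zero) h1
    rw [h2, norm_zero] at hx
    linarith
  rw [geom_sum_eq hz, norm_div, div_eq_mul_inv]
  rw [norm_inv, norm_norm] at h3
  have h4 : ‖((AddCircle.toCircle x : Circle) : ℂ) ^ m - 1‖ ≤ 2 := by
    refine (norm_sub_le _ _).trans ?_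
    rw [norm_pow, Circle.norm_coe, one_pow, norm_one]
    norm_num
  exact mul_le_mul h4 h3 (by positivity) (by norm_num)

/-- Parseval for a finite set of frequencies. -/
theorem parseval_aux {Y J : Type*} [Fintype Y] (B : Finset J) (T : J → Y → ℂ)
    (h1 : ∀ a ∈ B, ∀ y, ‖T a y‖ = 1)
    (h0 : ∀ a ∈ B, ∀ b ∈ B, a ≠ b → ∑ y, T a y * (starRingEnd ℂ) (T b y) = 0) :
    ∑ y, ‖∑ a ∈ B, T a y‖ ^ 2 = (Fintype.card Y : ℝ) * B.card := by
  have key : ((∑ y, ‖∑ a ∈ B, T a y‖ ^ 2 : ℝ) : ℂ) = (Fintype.card Y : ℂ) * B.card := by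
    push_cast
    calc ∑ y, ((‖∑ a ∈ B, T a y‖ : ℂ)) ^ 2
        = ∑ y, ∑ a ∈ B, ∑ b ∈ B, T a y * (starRingEnd ℂ) (T b y) := by
          refine Finset.sum_congr rfl fun y _ => ?_
          rw [← Complex.mul_conj', map_sum, Finset.sum_mul_sum]
      _ = ∑ a ∈ B, ∑ b ∈ B, ∑ y, T a y * (starRingEnd ℂ) (T b y) := by
          rw [Finset.sum_comm]
          refine Finset.sum_congr rfl fun a _ => ?_
          rw [Finset.sum_comm]
      _ = ∑ a ∈ B, ∑ y, T a y * (starRingEnd ℂ) (T a y) := by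
          refine Finset.sum_congr rfl fun a ha => ?_
          exact Finset.sum_eq_single_of_mem a ha fun b hb hba => h0 a ha b hb hba.symm
      _ = ∑ a ∈ B, (Fintype.card Y : ℂ) := by
          refine Finset.sum_congr rfl fun a ha => ?_
          simp [Complex.mul_conj', h1 a ha]
      _ = _ := by simp [mul_comm]
  exact_mod_cast key

theorem toCircle_sum {I : Type*} (s : Finset I) (f : I → Circle1) :
    AddCircle.toCircle (∑ i ∈ s, f i) = ∏ i ∈ s, AddCircle.toCircle (f i) := by
  classical
  induction s using Finset.induction_on with
  | empty => simp
  | insert a s ha ih => rw [Finset.sum_insert ha, Finset.prod_insert ha, AddCircle.toCircle_add, ih]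

theorem circle_coe_prod {I : Type*} (s : Finset I) (f : I → Circle) :
    ((∏ i ∈ s, f i : Circle) : ℂ) = ∏ i ∈ s, (f i : ℂ) :=
  map_prod Circle.coeHom f s

/-- Quantitative Kronecker theorem. -/
theorem kronecker_finite {Y I : Type*} [AddCommGroup Y] [Fintype Y] [Fintype I]
    (h : I → Y →+ Circle1) (η C : ℝ) (m : ℕ)
    (hC : ∀ x : Circle1, η ≤ ‖x‖ →
      ‖∑ a ∈ Finset.range m, ((AddCircle.toCircle x : Circle) : ℂ) ^ a‖ ≤ C)
    (hm0 : 0 < m)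
    (hm : (Fintype.card I : ℝ) * C ^ 2 < m)
    (hc : ∀ c : I → ℤ, c ≠ 0 → (∀ i, |c i| < m) → ∃ y, ∑ i, c i • h i y ≠ 0)
    (t : I → Circle1) : ∃ y, ∀ i, ‖h i y - t i‖ < η := by
  classical
  by_contra hcon
  push Not at hcon
  let T : (I → ℕ) → Y → ℂ := fun a y =>
    ∏ i, ((AddCircle.toCircle (h i y - t i) : Circle) : ℂ) ^ a i
  have hT1 : ∀ a y, ‖T a y‖ = 1 := by
    intro a y
    simp only [T, norm_prod, norm_pow, Circle.norm_coe, one_pow, Finset.prod_const_one]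
  have hTo : ∀ a b : I → ℕ, (∀ i, a i < m) → (∀ i, b i < m) → a ≠ b →
      ∑ y, T a y * (starRingEnd ℂ) (T b y) = 0 := by
    intro a b ha hb hab
    let c : I → ℤ := fun i => (a i : ℤ) - b i
    obtain ⟨y₀, hy₀⟩ := hc c (by
      intro hc0
      apply hab
      funext i
      have := congrFun hc0 i
      simp only [c, Pi.zero_apply] at this
      omega) (by
      intro i
      have := ha i
      have := hb i
      simp only [c, abs_lt]
      omega)
    have hform : ∀ y, T a y * (starRingEnd ℂ) (T b y) =
        ((AddCircle.toCircle (∑ i, c i • h i y) : Circle) : ℂ) *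
        ((AddCircle.toCircle (∑ i, c i • (- t i)) : Circle) : ℂ) := by
      intro y
      rw [← Circle.coe_mul, ← AddCircle.toCircle_add, ← Finset.sum_add_distrib, toCircle_sum]
      simp only [T, map_prod, ← Finset.prod_mul_distrib, circle_coe_prod]
      refine Finset.prod_congr rfl fun i _ => ?_
      rw [← smul_add, ← sub_eq_add_neg, AddCircle.toCircle_zsmul, map_pow, ← Circle.coe_inv_eq_conj,
        ← Circle.coe_pow, ← Circle.coe_pow, ← Circle.coe_mul]
      congr 1
      simp only [c]
      rw [zpow_sub, zpow_natCast, zpow_natCast, inv_pow]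
    simp only [hform]
    rw [← Finset.sum_mul]
    let ψ : AddChar Y ℂ :=
      { toFun := fun y => ((AddCircle.toCircle (∑ i, c i • h i y) : Circle) : ℂ)
        map_zero_eq_one' := by simp
        map_add_eq_mul' := by
          intro y y'
          rw [← Circle.coe_mul, ← AddCircle.toCircle_add, ← Finset.sum_add_distrib]
          simp only [map_add, smul_add] }
    have hψ : ψ ≠ 1 := by
      intro h1
      have h2 : ψ y₀ = 1 := by rw [h1]; rfl
      apply hy₀
      apply AddCircle.injective_toCircle (one_ne_zero (α := ℝ))
      rw [AddCircle.toCircle_zero]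
      exact Circle.ext h2
    have h3 : ∑ y, ((AddCircle.toCircle (∑ i, c i • h i y) : Circle) : ℂ) = 0 :=
      AddChar.sum_eq_zero_of_ne_one hψ
    rw [h3, zero_mul]
  let B : Finset (I → ℕ) := Fintype.piFinset fun _ => Finset.range m
  let Bi : I → Finset (I → ℕ) := fun i =>
    Fintype.piFinset fun j => if j = i then {0} else Finset.range m
  have hBmem : ∀ a ∈ B, ∀ i, a i < m := by
    intro a ha i
    simpa using Fintype.mem_piFinset.1 ha i
  have hBimem : ∀ j, ∀ a ∈ Bi j, ∀ i, a i < m := by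
    intro j a ha i
    have := Fintype.mem_piFinset.1 ha i
    split_ifs at this
    · simp at this; omega
    · simpa using this
  have hPB := parseval_aux B T (fun a _ y => hT1 a y)
    (fun a ha b hb hab => hTo a b (hBmem a ha) (hBmem b hb) hab)
  have hPBi := fun j => parseval_aux (Bi j) T (fun a _ y => hT1 a y)
    (fun a ha b hb hab => hTo a b (hBimem j a ha) (hBimem j b hb) hab)
  have hcB : ∀ j, B.card = m * (Bi j).card := by
    intro j
    simp only [B, Bi, Fintype.card_piFinset]
    rw [← Finset.mul_prod_erase _ _ (Finset.mem_univ j), Finset.card_range,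
      ← Finset.mul_prod_erase Finset.univ (fun i => (if i = j then ({0} : Finset ℕ) else Finset.range m).card) (Finset.mem_univ j)]
    simp only [if_true, Finset.card_singleton, one_mul]
    congr 1
    refine Finset.prod_congr rfl fun i hi => ?_
    rw [if_neg (Finset.ne_of_mem_erase hi), Finset.card_range]
  have hsumB : ∀ y, ∑ a ∈ B, T a y = ∏ i, ∑ a ∈ Finset.range m,
      ((AddCircle.toCircle (h i y - t i) : Circle) : ℂ) ^ a := by
    intro y
    rw [Finset.prod_univ_sum]
  have hsumBi : ∀ j y, ∑ a ∈ B, T a y = (∑ a ∈ Finset.range m,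
      ((AddCircle.toCircle (h j y - t j) : Circle) : ℂ) ^ a) * ∑ a ∈ Bi j, T a y := by
    intro j y
    rw [hsumB]
    simp only [T, Bi]
    rw [← Finset.prod_univ_sum (fun i => if i = j then ({0} : Finset ℕ) else Finset.range m)
      (fun i a => ((AddCircle.toCircle (h i y - t i) : Circle) : ℂ) ^ a)]
    rw [← Finset.mul_prod_erase _ _ (Finset.mem_univ j)]
    congr 1
    rw [← Finset.mul_prod_erase Finset.univ (fun i => ∑ a ∈ (if i = j then ({0} : Finset ℕ) else Finset.range m), ((AddCircle.toCircle (h i y - t i) : Circle) : ℂ) ^ a) (Finset.mem_univ j)]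
    simp only [if_true, Finset.sum_singleton, pow_zero, one_mul]
    refine Finset.prod_congr rfl fun i hi => ?_
    rw [if_neg (Finset.ne_of_mem_erase hi)]
  have hbound : ∑ y, ‖∑ a ∈ B, T a y‖ ^ 2 ≤ ∑ y, ∑ j, C ^ 2 * ‖∑ a ∈ Bi j, T a y‖ ^ 2 := by
    refine Finset.sum_le_sum fun y _ => ?_
    obtain ⟨j, hj⟩ := hcon y
    refine le_trans ?_ (Finset.single_le_sum (f := fun j => C ^ 2 * ‖∑ a ∈ Bi j, T a y‖ ^ 2)
      (fun j _ => by positivity) (Finset.mem_univ j))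
    rw [hsumBi j y, norm_mul, mul_pow]
    have := hC _ hj
    gcongr
  rw [Finset.sum_comm] at hbound
  simp only [← Finset.mul_sum, hPBi, hPB] at hbound
  have hY : (0 : ℝ) < Fintype.card Y := by
    have : 0 < Fintype.card Y := Fintype.card_pos
    exact_mod_cast this
  have hBpos : (0 : ℝ) < B.card := by
    have : 0 < B.card := by
      simp only [B, Fintype.card_piFinset, Finset.card_range]
      positivity
    exact_mod_cast this
  have hmR : (0:ℝ) < m := by exact_mod_cast hm0
  have h5 : ∀ j, ((Bi j).card : ℝ) = B.card / m := by
    intro j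
    rw [hcB j]; push_cast; field_simp
  simp only [h5, Finset.sum_const, Finset.card_univ, nsmul_eq_mul] at hbound
  have h6 : (Fintype.card Y : ℝ) * B.card * m ≤ (Fintype.card Y : ℝ) * B.card * (Fintype.card I * C ^ 2) := by
    calc (Fintype.card Y : ℝ) * B.card * m
        ≤ (C ^ 2 * (Fintype.card Y * ((Fintype.card I : ℝ) * (B.card / m)))) * m :=
          mul_le_mul_of_nonneg_right hbound hmR.le
      _ = _ := by field_simp
  have h7 := le_of_mul_le_mul_left h6 (by positivity)
  linarith

/-- Approximation of arbitrary targets by a homomorphism given by circle values on coordinates. -/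
theorem kronecker_finsupp {ι I : Type*} [Fintype I] (v : I → ι →₀ ℤ) (η C : ℝ) (m : ℕ)
    (hC : ∀ x : Circle1, η ≤ ‖x‖ →
      ‖∑ a ∈ Finset.range m, ((AddCircle.toCircle x : Circle) : ℂ) ^ a‖ ≤ C)
    (hm0 : 0 < m)
    (hm : (Fintype.card I : ℝ) * C ^ 2 < m)
    (hc : ∀ c : I → ℤ, c ≠ 0 → (∀ i, |c i| < m) → ∑ i, c i • v i ≠ 0)
    (t : I → Circle1) :
    ∃ X : ι → Circle1, ∀ i, ‖(∑ μ ∈ (v i).support, v i μ • X μ) - t i‖ < η := by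
  classical
  let S : Finset ι := Finset.univ.biUnion fun i => (v i).support
  let Cs : Finset (I → ℤ) := Fintype.piFinset fun _ => Finset.Ioo (-(m:ℤ)) m
  let M : ℕ := (∑ c ∈ Cs, ∑ μ ∈ S, ((∑ i, c i • v i) μ).natAbs) + 1
  have hM : NeZero M := ⟨by simp [M]⟩
  let h : I → (S → ZMod M) →+ Circle1 := fun i =>
    { toFun := fun y => ∑ μ : S, v i μ • ZMod.toAddCircle (y μ)
      map_zero' := by simp
      map_add' := by
        intro y y'
        simp only [Pi.add_apply, map_add, smul_add, Finset.sum_add_distrib] }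
  obtain ⟨y, hy⟩ := kronecker_finite h η C m hC hm0 hm (by
    intro c hc0 hcm
    have hw := hc c hc0 hcm
    set w := ∑ i, c i • v i with hwdef
    obtain ⟨μ, hμ⟩ := Finsupp.ne_iff.1 hw
    rw [Finsupp.zero_apply] at hμ
    have hμS : μ ∈ S := by
      by_contra hμS
      apply hμ
      rw [hwdef, Finsupp.finsetSum_apply]
      refine Finset.sum_eq_zero fun i _ => ?_
      have : v i μ = 0 := by
        by_contra h0
        exact hμS (Finset.mem_biUnion.2 ⟨i, Finset.mem_univ i, Finsupp.mem_support_iff.2 h0⟩)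
      simp [this]
    refine ⟨Pi.single ⟨μ, hμS⟩ 1, ?_⟩
    have hcS : c ∈ Cs := by
      refine Fintype.mem_piFinset.2 fun i => ?_
      rw [Finset.mem_Ioo]
      exact abs_lt.1 (hcm i)
    have hlt : (w μ).natAbs < M := by
      have h1 : (w μ).natAbs ≤ ∑ μ ∈ S, ((∑ i, c i • v i) μ).natAbs :=
        Finset.single_le_sum (f := fun μ => ((∑ i, c i • v i) μ).natAbs) (fun _ _ => Nat.zero_le _) hμS
      have h2 : ∑ μ ∈ S, ((∑ i, c i • v i) μ).natAbs ≤ ∑ c ∈ Cs, ∑ μ ∈ S, ((∑ i, c i • v i) μ).natAbs :=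
        Finset.single_le_sum (f := fun c : I → ℤ => ∑ μ ∈ S, ((∑ i, c i • v i) μ).natAbs) (fun _ _ => Nat.zero_le _) hcS
      exact Nat.lt_succ_of_le (h1.trans h2)
    have hval : ∑ i, c i • h i (Pi.single ⟨μ, hμS⟩ 1) = ZMod.toAddCircle ((w μ : ℤ) : ZMod M) := by
      have h1 : ∀ i, h i (Pi.single ⟨μ, hμS⟩ 1) = v i μ • ZMod.toAddCircle (1 : ZMod M) := by
        intro i
        change ∑ ν : S, v i ν • ZMod.toAddCircle ((Pi.single ⟨μ, hμS⟩ 1 : S → ZMod M) ν) = _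
        rw [Finset.sum_eq_single_of_mem ⟨μ, hμS⟩ (Finset.mem_univ _)]
        · simp
        · intro ν _ hν
          simp [Pi.single_eq_of_ne hν]
      simp only [h1]
      rw [hwdef, Finsupp.finsetSum_apply, Int.cast_sum, map_sum]
      refine Finset.sum_congr rfl fun i _ => ?_
      rw [smul_smul, ← map_zsmul]
      congr 1
      simp
    rw [hval]
    intro h0
    rw [← map_zero (ZMod.toAddCircle (N := M))] at h0
    have h1 := ZMod.toAddCircle_injective M h0
    rw [ZMod.intCast_zmod_eq_zero_iff_dvd] at h1
    exact hμ (Int.eq_zero_of_dvd_of_natAbs_lt_natAbs h1 (by simpa using hlt))) t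
  refine ⟨fun μ => if hμ : μ ∈ S then ZMod.toAddCircle (y ⟨μ, hμ⟩) else 0, fun i => ?_⟩
  convert hy i using 3
  change _ = ∑ μ : S, v i μ • ZMod.toAddCircle (y μ)
  have h1 : (v i).support ⊆ S := by
    intro μ hμ
    exact Finset.mem_biUnion.2 ⟨i, Finset.mem_univ i, hμ⟩
  rw [Finset.sum_subset h1, ← Finset.sum_coe_sort S]
  · refine Finset.sum_congr rfl fun μ _ => ?_
    simp only [dif_pos μ.2]
  · intro μ _ hμ
    rw [Finsupp.notMem_support_iff.1 hμ, zero_smul]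

theorem norm_coe_le_abs (x : ℝ) : ‖(x : Circle1)‖ ≤ |x| := by
  have := AddCircle.norm_eq (1:ℝ) (x := x)
  rw [this]
  simpa using round_le x 0

/-- Points of a ball lie in the arc with the same centre. -/
theorem mem_arcOf_of_norm (a l r : ℝ) (hr : r ≤ l / 2) (u : Circle1)
    (hu : ‖u - ((a + l / 2 : ℝ) : Circle1)‖ < r) : u ∈ arcOf a l := by
  obtain ⟨x, rfl⟩ := QuotientAddGroup.mk_surjective u
  change ‖((x : ℝ) : Circle1) - _‖ < r at hu
  change ((x : ℝ) : Circle1) ∈ _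
  rw [← AddCircle.coe_sub, AddCircle.norm_eq] at hu
  simp only [inv_one, one_mul, mul_one] at hu
  rw [abs_lt] at hu
  refine ⟨x - round (x - (a + l / 2)), ⟨by linarith, by linarith⟩, ?_⟩
  simp only
  rw [← sub_eq_zero, ← AddCircle.coe_sub, AddCircle.coe_eq_zero_iff]
  exact ⟨-round (x - (a + l / 2)), by simp⟩

theorem norm_of_mem_arcOf (a l : ℝ) (u : Circle1) (hu : u ∈ arcOf a l) :
    ‖u - ((a + l / 2 : ℝ) : Circle1)‖ ≤ l / 2 := by
  obtain ⟨x, hx, rfl⟩ := hu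
  simp only
  rw [← AddCircle.coe_sub]
  refine (norm_coe_le_abs _).trans ?_
  rw [abs_le]
  constructor <;> linarith [hx.1, hx.2]

theorem arcOf_ne_univ (a l : ℝ) (hl : l ≤ 1) : arcOf a l ≠ Set.univ := by
  intro h
  have : ((a : ℝ) : Circle1) ∈ arcOf a l := h ▸ Set.mem_univ _
  obtain ⟨x, hx, hxa⟩ := this
  simp only at hxa
  rw [← sub_eq_zero, ← AddCircle.coe_sub, AddCircle.coe_eq_zero_iff] at hxa
  obtain ⟨n, hn⟩ := hxa
  simp only [zsmul_eq_mul, mul_one] at hn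
  have h1 : (0:ℝ) < n := by linarith [hx.1]
  have h2 : (n:ℝ) < 1 := by linarith [hx.2]
  have h3 : (0:ℤ) < n := by exact_mod_cast h1
  have h4 : n < (1:ℤ) := by exact_mod_cast h2
  omega

theorem nsmul_set_bound (s : Set Circle1) (x : Circle1) (r : ℝ) (hs : ∀ u ∈ s, ‖u - x‖ ≤ r)
    (m : ℕ) : ∀ u ∈ m • s, ‖u - m • x‖ ≤ m * r := by
  induction m with
  | zero =>
    intro u hu
    rw [zero_nsmul] at hu
    rw [Set.mem_zero.1 hu]
    simp
  | succ k ih =>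
    intro u hu
    rw [succ_nsmul] at hu
    obtain ⟨a, ha, b, hb, rfl⟩ := Set.mem_add.1 hu
    have : a + b - (k + 1) • x = (a - k • x) + (b - x) := by rw [succ_nsmul]; abel
    rw [this]
    refine (norm_add_le _ _).trans ?_
    have := ih a ha
    have := hs b hb
    push_cast
    linarith

theorem zsmul_set_bound (s : Set Circle1) (x : Circle1) (r : ℝ) (hs : ∀ u ∈ s, ‖u - x‖ ≤ r)
    (m : ℤ) : ∀ u ∈ m • s, ‖u - m • x‖ ≤ |(m : ℝ)| * r := by
  obtain ⟨k, rfl | rfl⟩ := m.eq_nat_or_neg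
  · intro u hu
    rw [natCast_zsmul] at hu
    simpa using nsmul_set_bound s x r hs k u hu
  · intro u hu
    rw [neg_zsmul, natCast_zsmul] at hu
    have := nsmul_set_bound s x r hs k (-u) (Set.mem_neg.1 hu)
    rw [← norm_neg]
    simpa [add_comm, sub_eq_add_neg] using this


theorem eventually_relation_ne {κ : Cardinal} (p : Ultrafilter ℕ) (F : Finset (ℕ → GZ κ))
    (hli : LinearIndependent ℚ
      (Sum.elim (fun f : ↥F => cls κ p ↑f) (fun α : Idx κ => clsChi κ p α)))
    (E : Finset (Idx κ)) (c : (↥F ⊕ ↥E) → ℤ) (hc : c ≠ 0) :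
    {n | ∑ i, c i • (Sum.elim (fun f : ↥F => f.1 n) (fun α : ↥E => chi κ α.1) i : GZ κ) ≠ 0} ∈ p := by
  by_contra hcon
  have hz : {n | ∑ i, c i • (Sum.elim (fun f : ↥F => f.1 n) (fun α : ↥E => chi κ α.1) i : GZ κ) = 0} ∈ p := by
    rw [← Ultrafilter.compl_mem_iff_notMem] at hcon
    refine Filter.mem_of_superset hcon fun n hn => ?_
    by_contra h
    exact hn h
  let w : (↥F ⊕ ↥E) → ℕ → GZ κ := Sum.elim (fun f : ↥F => f.1) (fun α : ↥E => fun _ => chi κ α.1)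
  have h1 : clsHom κ p (∑ i, c i • w i) = 0 := by
    change ((fun n => toQ κ ((∑ i, c i • w i) n) : ℕ → GQ κ) : Filter.Germ (↑p : Filter ℕ) (GQ κ)) = _
    rw [← Filter.Germ.coe_zero, Filter.Germ.coe_eq]
    refine Filter.mem_of_superset hz fun n hn => ?_
    have h2 : (∑ i, c i • w i) n = 0 := by
      rw [← hn, Finset.sum_apply]
      refine Finset.sum_congr rfl fun i _ => ?_
      rcases i with i | i <;> rfl
    change toQ κ ((∑ i, c i • w i) n) = 0
    rw [h2]
    simp [toQ]
  rw [map_sum] at h1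
  have hinj : Function.Injective (Sum.map id Subtype.val : (↥F ⊕ ↥E) → (↥F ⊕ Idx κ)) :=
    Sum.map_injective.2 ⟨Function.injective_id, Subtype.val_injective⟩
  have h3 := hli.comp _ hinj
  rw [Fintype.linearIndependent_iff] at h3
  apply hc
  have h4 := h3 (fun i => (c i : ℚ)) (by
    rw [← h1]
    refine Finset.sum_congr rfl fun i _ => ?_
    rw [map_zsmul, Int.cast_smul_eq_zsmul]
    rcases i with i | i <;> rfl)
  funext i
  have := h4 i
  exact_mod_cast this

theorem statement16 (κ : Cardinal) (hκ : ℵ₀ ≤ κ) (hpow : κ ^ ℵ₀ = κ)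
    (p : Ultrafilter ℕ) (hp : IsSelective p)
    (F : Finset (ℕ → GZ κ))
    (hli : LinearIndependent ℚ
      (Sum.elim (fun f : ↥F => cls κ p ↑f) (fun α : Idx κ => clsChi κ p α)))
    (ε : ℝ) (hε : 0 < ε) (E : Finset (Idx κ)) :
    ∃ A ∈ p, ∃ δ : ℕ → ℝ, (∀ n ∈ A, 0 < δ n) ∧
      ∀ U : (ℕ → GZ κ) → Set Circle1, (∀ f ∈ F, ∃ a : ℝ, U f = arcOf a ε) →
      ∀ ϱ : Idx κ → Set Circle1, IsArcFnGe κ ε ϱ → arcSupp κ ϱ ⊆ ↑E →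
      ∀ n ∈ A, ∃ ψ : Idx κ → Set Circle1,
        IsEpsArcFn κ (δ n) ψ ∧ ArcFnLE κ ψ ϱ ∧
        arcSupp κ ψ = (⋃ f ∈ F, ↑(f n).support) ∪ ↑E ∧
        ∀ f ∈ F, (∑ μ ∈ (f n).support, (f n) μ • ψ μ) ⊆ U f := by
  classical
  obtain ⟨C, hC⟩ := exists_geom_bound (ε / 4) (by positivity)
  obtain ⟨m, hm⟩ := exists_nat_gt (max 0 ((Fintype.card (↥F ⊕ ↥E) : ℝ) * C ^ 2))
  have hm0 : 0 < m := by exact_mod_cast lt_of_le_of_lt (le_max_left _ _) hm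
  have hm1 := lt_of_le_of_lt (le_max_right _ _) hm
  let v : ℕ → (↥F ⊕ ↥E) → GZ κ := fun n =>
    Sum.elim (fun f : ↥F => f.1 n) (fun α : ↥E => chi κ α.1)
  let Cs : Finset ((↥F ⊕ ↥E) → ℤ) := Fintype.piFinset fun _ => Finset.Ioo (-(m:ℤ)) m
  let A : Set ℕ := {n | ∀ c ∈ Cs, c ≠ 0 → ∑ i, c i • v n i ≠ 0}
  have hA : A ∈ p := by
    have : ∀ᶠ n in (p : Filter ℕ), ∀ c ∈ Cs, c ≠ 0 → ∑ i, c i • v n i ≠ 0 := by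
      rw [Filter.eventually_all_finset]
      intro c _
      by_cases hc : c = 0
      · exact Filter.Eventually.of_forall fun n h => absurd hc h
      · exact Filter.mem_of_superset (eventually_relation_ne p F hli E c hc) fun n hn _ => hn
    exact this
  let L : ℕ → ℝ := fun n => ∑ f ∈ F, ∑ μ ∈ (f n).support, |((f n μ : ℤ) : ℝ)|
  have hL : ∀ n, 0 ≤ L n := fun n =>
    Finset.sum_nonneg fun _ _ => Finset.sum_nonneg fun _ _ => abs_nonneg _
  let δ : ℕ → ℝ := fun n => min (1 / 2) (ε / (4 * (1 + L n)))
  have hδ : ∀ n, 0 < δ n := fun n => lt_min (by norm_num) (by have := hL n; positivity)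
  have hδ2 : ∀ n, δ n * (1 + L n) ≤ ε / 4 := by
    intro n
    have h1 : δ n ≤ ε / (4 * (1 + L n)) := min_le_right _ _
    have h2 : 0 < 1 + L n := by linarith [hL n]
    calc δ n * (1 + L n) ≤ ε / (4 * (1 + L n)) * (1 + L n) := by gcongr
      _ = ε / 4 := by field_simp
  refine ⟨A, hA, δ, fun n _ => hδ n, ?_⟩
  intro U hU ϱ hϱ hϱE n hn
  have hδn := hδ n
  have hLn := hL n
  have hδL := hδ2 n
  have hδε : δ n ≤ ε / 4 := by nlinarith
  choose! a ha using hU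
  have hϱ' : ∀ α, ∃ t : Circle1, ∀ u, ‖u - t‖ < ε / 2 → u ∈ ϱ α := by
    intro α
    rcases hϱ.2 α with h | ⟨b, l, hl, h⟩
    · exact ⟨0, fun u _ => h ▸ Set.mem_univ u⟩
    · refine ⟨((b + l / 2 : ℝ) : Circle1), fun u hu => ?_⟩
      rw [h]
      exact mem_arcOf_of_norm b l (ε / 2) (by linarith) u hu
  choose t ht using hϱ'
  obtain ⟨X, hX⟩ := kronecker_finsupp (v n) (ε / 4) C m (fun x hx => hC x hx m) hm0 hm1
    (fun c hc hcm => hn c (Fintype.mem_piFinset.2 fun i => by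
      rw [Finset.mem_Ioo]; exact abs_lt.1 (hcm i)) hc)
    (Sum.elim (fun f : ↥F => ((a f.1 + ε / 2 : ℝ) : Circle1)) (fun α : ↥E => t α.1))
  have hXF : ∀ f ∈ F, ‖(∑ μ ∈ (f n).support, f n μ • X μ) - ((a f + ε / 2 : ℝ) : Circle1)‖ < ε / 4 :=
    fun f hf => hX (Sum.inl ⟨f, hf⟩)
  have hXE : ∀ α ∈ E, ‖X α - t α‖ < ε / 4 := by
    intro α hα
    have h1 : ‖(∑ μ ∈ (chi κ α).support, chi κ α μ • X μ) - t α‖ < ε / 4 := hX (Sum.inr ⟨α, hα⟩)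
    have h2 : (chi κ α).support = {α} := Finsupp.support_single_ne_zero α one_ne_zero
    rw [h2, Finset.sum_singleton] at h1
    simpa [chi] using h1
  have hlift : ∀ μ, ∃ x : ℝ, (x : Circle1) = X μ := fun μ => QuotientAddGroup.mk_surjective (X μ)
  choose x hx using hlift
  let S : Set (Idx κ) := (⋃ f ∈ F, ↑(f n).support) ∪ ↑E
  have hSfin : S.Finite :=
    (Set.Finite.biUnion F.finite_toSet fun f _ => (f n).support.finite_toSet).union E.finite_toSet
  let ψ : Idx κ → Set Circle1 := fun μ => if μ ∈ S then arcOf (x μ - δ n / 2) (δ n) else Set.univ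
  have hψS : ∀ μ ∈ S, ψ μ = arcOf (x μ - δ n / 2) (δ n) := fun μ hμ => if_pos hμ
  have hψS' : ∀ μ, μ ∉ S → ψ μ = Set.univ := fun μ hμ => if_neg hμ
  have hψb : ∀ μ ∈ S, ∀ u ∈ ψ μ, ‖u - X μ‖ ≤ δ n / 2 := by
    intro μ hμ u hu
    rw [hψS μ hμ] at hu
    have := norm_of_mem_arcOf _ _ u hu
    rwa [sub_add_cancel, hx] at this
  have hsupp : arcSupp κ ψ = S := by
    ext μ
    constructor
    · intro h
      by_contra hμ
      exact h (hψS' μ hμ)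
    · intro hμ
      change ψ μ ≠ Set.univ
      rw [hψS μ hμ]
      exact arcOf_ne_univ _ _ ((min_le_left _ _).trans (by norm_num))
  refine ⟨ψ, ⟨hsupp ▸ hSfin, fun α => ?_⟩, fun α => ?_, hsupp, fun f hf => ?_⟩
  · by_cases hα : α ∈ S
    · exact Or.inr ⟨_, hψS α hα⟩
    · exact Or.inl (hψS' α hα)
  · left
    by_cases hα : α ∈ E
    · intro u hu
      have h1 : u ∈ Metric.closedBall (X α) (δ n / 2) := by
        refine closure_minimal ?_ Metric.isClosed_closedBall hu
        intro u hu
        rw [Metric.mem_closedBall, dist_eq_norm]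
        exact hψb α (Or.inr hα) u hu
      rw [Metric.mem_closedBall, dist_eq_norm] at h1
      apply ht
      have h2 := hXE α hα
      have h3 := norm_sub_le_norm_sub_add_norm_sub u (X α) (t α)
      linarith
    · have : ϱ α = Set.univ := by
        by_contra h
        exact hα (hϱE h)
      rw [this]
      exact Set.subset_univ _
  · intro u hu
    rw [ha f hf]
    refine mem_arcOf_of_norm _ _ (ε / 2) le_rfl u ?_
    obtain ⟨g, hg, rfl⟩ := (Set.mem_finsetSum _ _ _).1 hu
    have h1 : ‖∑ μ ∈ (f n).support, g μ - ∑ μ ∈ (f n).support, f n μ • X μ‖ ≤ L n * (δ n / 2) := by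
      rw [← Finset.sum_sub_distrib]
      refine (norm_sum_le _ _).trans ?_
      calc ∑ μ ∈ (f n).support, ‖g μ - f n μ • X μ‖
          ≤ ∑ μ ∈ (f n).support, |((f n μ : ℤ) : ℝ)| * (δ n / 2) := by
            refine Finset.sum_le_sum fun μ hμ => ?_
            exact zsmul_set_bound (ψ μ) (X μ) _
              (hψb μ (Or.inl (Set.mem_biUnion hf hμ))) _ _ (hg hμ)
        _ = (∑ μ ∈ (f n).support, |((f n μ : ℤ) : ℝ)|) * (δ n / 2) := by rw [Finset.sum_mul]
        _ ≤ L n * (δ n / 2) := by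
            gcongr
            exact Finset.single_le_sum (f := fun f : ℕ → GZ κ => ∑ μ ∈ (f n).support, |((f n μ : ℤ) : ℝ)|)
              (fun _ _ => Finset.sum_nonneg fun _ _ => abs_nonneg _) hf
    have h2 := hXF f hf
    have h3 := norm_sub_le_norm_sub_add_norm_sub (∑ μ ∈ (f n).support, g μ)
      (∑ μ ∈ (f n).support, f n μ • X μ) ((a f + ε / 2 : ℝ) : Circle1)
    nlinarith

end
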